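/- Let λ be a partition, m ≥ 1, and T ∈ B'_λ(2,m), i.e., T ∈ B_λ(2,m) with w'(T) Yamanouchi. Let α = (α_1, α_2, …) where α_i is the number of boxes in row i of T with first coordinate 1. Define φ(T) as follows: if the first row of T contains a box with first coordinate 1, let T' be the filling obtained by changing the entry (1,a) of the rightmost such box to (2,a), and set φ(T) = T' if T' ∈ B'_λ(2,m) (i.e., T' is a lexicographic bitableau with w'(T') Yamanouchi) and φ(T) = 0 otherwise; if the first row contains no box with first coordinate 1, set φ(T) = 0. Then φ(T) = 0 if and only if T is a Kronecker tableau, i.e., if and only if: (I) α_1 = α_2, or (II) α_1 > α_2 and either (i) the number of boxes in the second row of T with entry (2,1) equals α_1 − α_2, or (ii) the number of boxes in the first row of T with entry (2,2) equals α_1 − α_2. -/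

import Mathlib

/-- Lexicographic (weak) order on pairs: `(a,b) ≤ (a',b')` iff `a < a'`, or `a = a'` and `b ≤ b'`. -/
def lexLe (p q : ℕ × ℕ) : Prop := p.1 < q.1 ∨ (p.1 = q.1 ∧ p.2 ≤ q.2)

/-- Lexicographic strict order on pairs. -/
def lexLt (p q : ℕ × ℕ) : Prop := p.1 < q.1 ∨ (p.1 = q.1 ∧ p.2 < q.2)

/-- `T` (a total function on positions, row & column both 0-indexed) is a lexicographic
bitableau of shape `lam` with entries in `[n] × [m]`: on the cells of `lam`, entries are pairs
in `{1,…,n} × {1,…,m}`, weakly increasing along rows and strictly increasing down columns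
for the lexicographic order. -/
def IsBitabT (lam : YoungDiagram) (n m : ℕ) (T : ℕ → ℕ → ℕ × ℕ) : Prop :=
  (∀ i j, (i, j) ∈ lam → (1 ≤ (T i j).1 ∧ (T i j).1 ≤ n) ∧ (1 ≤ (T i j).2 ∧ (T i j).2 ≤ m)) ∧
  (∀ i j j', (i, j') ∈ lam → j ≤ j' → lexLe (T i j) (T i j')) ∧
  (∀ i i' j, (i', j) ∈ lam → i < i' → lexLt (T i j) (T i' j))

/-- `i`-th entry of the `a`-weight of `T`: the number of boxes whose entry has first coordinate `i`. -/
def aWtT (lam : YoungDiagram) (T : ℕ → ℕ → ℕ × ℕ) (i : ℕ) : ℕ :=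
  (lam.cells.filter fun c => (T c.1 c.2).1 = i).card

/-- `j`-th entry of the `b`-weight of `T`: the number of boxes whose entry has second coordinate `j`. -/
def bWtT (lam : YoungDiagram) (T : ℕ → ℕ → ℕ × ℕ) (j : ℕ) : ℕ :=
  (lam.cells.filter fun c => (T c.1 c.2).2 = j).card

/-- The list of boxes of `T` in sort-by-top reading order: boxes with first coordinate
`k = 1, …, n` in increasing order, within each group rows from bottom to top, left to right
within each row. -/
def wBoxes (lam : YoungDiagram) (n : ℕ) (T : ℕ → ℕ → ℕ × ℕ) : List (ℕ × ℕ) :=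
  (List.range n).flatMap fun k =>
    ((List.range (lam.colLen 0)).reverse).flatMap fun r =>
      ((List.range (lam.rowLen r)).filter fun c => decide ((T r c).1 = k + 1)).map fun c => (r, c)

/-- The sort-by-top reading word `w(T)`: the second coordinates of the boxes, in sort-by-top
reading order. -/
def wWordT (lam : YoungDiagram) (n : ℕ) (T : ℕ → ℕ → ℕ × ℕ) : List ℕ :=
  (wBoxes lam n T).map fun c => (T c.1 c.2).2

/-- Under the `i`-bracketing rule (each letter `i` becomes `)`, each letter `i+1` becomes `(`,
other letters are ignored), the letter at position `p` of `w` is an unmatched `)` (letter `i`):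
equivalently, every window of `w` ending at `p` contains strictly more letters `i` than
letters `i+1`. -/
def UnmatchedClose (w : List ℕ) (i p : ℕ) : Prop :=
  p < w.length ∧ w.getD p 0 = i ∧
    ∀ q, q ≤ p →
      ((w.drop q).take (p + 1 - q)).count (i + 1) < ((w.drop q).take (p + 1 - q)).count i

/-- Under the `i`-bracketing rule, the letter at position `p` of `w` is an unmatched `(`
(letter `i+1`): equivalently, every window of `w` starting at `p` contains strictly more
letters `i+1` than letters `i`. -/
def UnmatchedOpen (w : List ℕ) (i p : ℕ) : Prop :=
  p < w.length ∧ w.getD p 0 = i + 1 ∧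
    ∀ q, p ≤ q → q < w.length →
      ((w.drop p).take (q + 1 - p)).count i < ((w.drop p).take (q + 1 - p)).count (i + 1)

/-- The reversed sort-by-top reading word `w'(T)`: for `k = n, n−1, …, 1` in decreasing order,
the second coordinates of the boxes with first coordinate `k`, read row by row from the bottom
row to the top row, left to right within each row. -/
def w'WordT (lam : YoungDiagram) (n : ℕ) (T : ℕ → ℕ → ℕ × ℕ) : List ℕ :=
  (((List.range n).reverse).flatMap fun k =>
    ((List.range (lam.colLen 0)).reverse).flatMap fun r =>
      ((List.range (lam.rowLen r)).filter fun c => decide ((T r c).1 = k + 1)).map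
        fun c => (r, c)).map fun c => (T c.1 c.2).2

/-- A word is Yamanouchi if for every `i ≥ 1`, every suffix contains at least as many letters
`i` as letters `i+1`. -/
def Yamanouchi (w : List ℕ) : Prop :=
  ∀ i : ℕ, 1 ≤ i → ∀ s ∈ w.tails, s.count (i + 1) ≤ s.count i

/-- Membership in `B'_λ(2,m)`: a lexicographic bitableau of shape `λ` with entries in
`{1,2} × [m]` whose reading word `w'(T)` is Yamanouchi. -/
def IsBitab' (lam : YoungDiagram) (m : ℕ) (T : ℕ → ℕ → ℕ × ℕ) : Prop :=
  IsBitabT lam 2 m T ∧ Yamanouchi (w'WordT lam 2 T)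

/-- The number of boxes in row `i` (1-indexed) of `T` whose entry has first coordinate `1`. -/
def alphaRow (lam : YoungDiagram) (T : ℕ → ℕ → ℕ × ℕ) (i : ℕ) : ℕ :=
  (lam.cells.filter fun c => c.1 = i - 1 ∧ (T c.1 c.2).1 = 1).card

/-!
Number rows from `1`. Column strictness and the Yamanouchi condition force the boxes of row `r`
with first coordinate `1` to carry the second coordinate `r`. Hence `w'(T) = P ++ R ++ A ++ 1^α₁`,
where `R` lists the boxes of row `1` with first coordinate `2` and `A` the boxes below row `1` with
first coordinate `1`. The map `φ` turns an entry `(1, 1)` into `(2, 1)`, so it moves the last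
letter `1` to the front of `R`. The word stays Yamanouchi iff the number of letters `2` in
`R ++ A`, which is `α₂` plus the number of `(2, 2)` in row `1`, is less than `α₁`. The columns stay
strict iff `α₂` plus the number of `(2, 1)` in row `2` is less than `α₁`. Both sums are at most
`α₁`, so `φ(T) = 0` iff one of them equals `α₁`.
-/

section Words

variable {l P U V : List ℕ}

theorem yamanouchi_iff :
    Yamanouchi l ↔ ∀ i, 1 ≤ i → ∀ s, s <:+ l → s.count (i + 1) ≤ s.count i := by
  simp only [Yamanouchi, List.mem_tails]

theorem Yamanouchi.count_succ_le (h : Yamanouchi l) {i : ℕ} (hi : 1 ≤ i) :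
    l.count (i + 1) ≤ l.count i :=
  yamanouchi_iff.1 h i hi l List.suffix_rfl

theorem yamanouchi_append_iff :
    Yamanouchi (U ++ V) ↔
      Yamanouchi V ∧ ∀ s, s <:+ U → ∀ i, 1 ≤ i → (s ++ V).count (i + 1) ≤ (s ++ V).count i := by
  simp only [yamanouchi_iff]
  constructor
  · exact fun h ↦ ⟨fun i hi t ht ↦ h i hi t (List.suffix_append_of_suffix ht),
      fun s hs i hi ↦ h i hi _ (List.suffix_append_self_iff.2 hs)⟩
  · rintro ⟨hV, hU⟩ i hi t ht
    rcases List.suffix_or_suffix_of_suffix ht (List.suffix_append U V) with htV | ⟨s, rfl⟩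
    · exact hV i hi t htV
    · exact hU s (List.suffix_append_self_iff.1 ht) i hi

theorem Yamanouchi.of_append (h : Yamanouchi (U ++ V)) : Yamanouchi V :=
  (yamanouchi_append_iff.1 h).1

theorem yamanouchi_replicate_one (k : ℕ) : Yamanouchi (List.replicate k 1) := by
  refine yamanouchi_iff.2 fun i hi t ht ↦ ?_
  have hnotMem : i + 1 ∉ t := fun hmem ↦ by
    have := List.eq_of_mem_replicate (ht.subset hmem)
    omega
  simp [List.count_eq_zero.2 hnotMem]

theorem Yamanouchi.one_cons (h : Yamanouchi l) : Yamanouchi (1 :: l) := by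
  refine yamanouchi_append_iff (U := [1]).2 ⟨h, fun s hs i hi ↦ ?_⟩
  have hs : s.count (i + 1) = 0 :=
    List.count_eq_zero.2 fun hmem ↦ by have := List.mem_singleton.1 (hs.subset hmem); omega
  have := h.count_succ_le hi
  simp only [List.count_append]
  omega

theorem Yamanouchi.append_of_perm (h : Yamanouchi (P ++ U)) (hV : Yamanouchi V)
    (hUV : U.Perm V) : Yamanouchi (P ++ V) := by
  refine yamanouchi_append_iff.2 ⟨hV, fun s hs i hi ↦ ?_⟩
  rw [((hUV.append_left s).count_eq _).symm, ((hUV.append_left s).count_eq _).symm]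
  exact (yamanouchi_append_iff.1 h).2 s hs i hi

theorem Yamanouchi.append_one_cons_iff (h : Yamanouchi (P ++ (U ++ [1]))) :
    Yamanouchi (P ++ 1 :: U) ↔ Yamanouchi U :=
  ⟨fun h' ↦ h'.of_append.of_append (U := [1]),
    fun hU ↦ h.append_of_perm hU.one_cons (List.perm_append_singleton 1 U)⟩

theorem Yamanouchi.append_replicate_one_of_count_two_le {a : ℕ}
    (h : Yamanouchi (U ++ List.replicate (a + 1) 1)) (hU : U.count 2 ≤ a) :
    Yamanouchi (U ++ List.replicate a 1) := by
  refine yamanouchi_append_iff.2 ⟨yamanouchi_replicate_one a, fun s hs i hi ↦ ?_⟩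
  have hsucc := (yamanouchi_append_iff.1 h).2 s hs i hi
  rcases hi.eq_or_lt with rfl | hi
  · have := hs.sublist.count_le 2
    have htwo : (List.replicate a 1).count 2 = 0 := by simp [List.count_replicate]
    simp only [List.count_append, List.count_replicate_self, Nat.reduceAdd, htwo]
    omega
  · simpa [List.count_replicate, hi.ne, (Nat.zero_lt_of_lt hi).ne'] using hsucc

/-- The leading letters `1` of `U` do not help: the suffix starting after them contains all the
letters `2` of `U ++ V` and only the final `a` letters `1`. -/
theorem Yamanouchi.count_two_le_of_sorted {a : ℕ}
    (h : Yamanouchi (U ++ V ++ List.replicate a 1)) (hsorted : U.Pairwise (· ≤ ·))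
    (hpos : ∀ x ∈ U, 1 ≤ x) (hV : 1 ∉ V) : (U ++ V).count 2 ≤ a := by
  have of_one_notMem {W : List ℕ} (hW : 1 ∉ W) (h : Yamanouchi (W ++ List.replicate a 1)) :
      W.count 2 ≤ a := by
    simpa [List.count_replicate, List.count_eq_zero.2 hW] using h.count_succ_le le_rfl
  induction U with
  | nil => exact of_one_notMem hV h
  | cons x U ih =>
    obtain ⟨hx, hU⟩ := List.pairwise_cons.1 hsorted
    rcases (hpos x List.mem_cons_self).eq_or_lt with rfl | hx1
    · simpa using ih (h.of_append (U := [1])) hU fun y hy ↦ hpos y (List.mem_cons_of_mem _ hy)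
    · refine of_one_notMem ?_ h
      simp only [List.cons_append, List.mem_cons, List.mem_append, not_or]
      exact ⟨hx1.ne, fun hmem ↦ absurd (hx 1 hmem) (by omega), hV⟩

theorem Yamanouchi.append_replicate_one_iff {a : ℕ}
    (h : Yamanouchi (U ++ V ++ List.replicate (a + 1) 1)) (hsorted : U.Pairwise (· ≤ ·))
    (hpos : ∀ x ∈ U, 1 ≤ x) (hV : 1 ∉ V) :
    Yamanouchi (U ++ V ++ List.replicate a 1) ↔ (U ++ V).count 2 ≤ a :=
  ⟨fun h' ↦ h'.count_two_le_of_sorted hsorted hpos hV, h.append_replicate_one_of_count_two_le⟩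

theorem Yamanouchi.le_succ_of_sorted {N : ℕ} (h : Yamanouchi (U ++ V))
    (hsorted : U.Pairwise (· ≤ ·)) (hV : ∀ x ∈ V, x ≤ N) {x : ℕ} (hx : x ∈ U) : x ≤ N + 1 := by
  obtain ⟨U, y, rfl⟩ := (List.eq_nil_or_concat' U).resolve_left (List.ne_nil_of_mem hx)
  have hxy : x ≤ y := by
    rcases List.mem_append.1 hx with hx | hx
    · exact (List.pairwise_append.1 hsorted).2.2 x hx y List.mem_cons_self
    · exact (List.mem_singleton.1 hx).le
  by_contra! hlt
  have hy : Yamanouchi (y :: V) := (List.append_assoc U [y] V ▸ h).of_append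
  have hpred : 0 < (y :: V).count (y - 1) := by
    have hcount := hy.count_succ_le (i := y - 1) (by omega)
    rw [Nat.sub_add_cancel (by omega), List.count_cons_self] at hcount
    omega
  rcases List.mem_cons.1 (List.count_pos_iff.1 hpred) with heq | hmem
  · omega
  · have := hV _ hmem
    omega

end Words

theorem lt_card_filter_range_iff {n c : ℕ} {p : ℕ → Prop} [DecidablePred p]
    (hp : ∀ x y, x ≤ y → y < n → p y → p x) :
    c < ((Finset.range n).filter p).card ↔ c < n ∧ p c := by
  constructor
  · intro hc
    obtain ⟨y, hy, hcy⟩ : ∃ y ∈ (Finset.range n).filter p, c ≤ y := by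
      by_contra! hlt
      have := Finset.card_le_card fun y hy ↦ Finset.mem_range.2 (hlt y hy)
      rw [Finset.card_range] at this
      omega
    obtain ⟨hyn, hpy⟩ := Finset.mem_filter.1 hy
    have hyn := Finset.mem_range.1 hyn
    exact ⟨hcy.trans_lt hyn, hp c y hcy hyn hpy⟩
  · rintro ⟨hcn, hpc⟩
    have hsub : Finset.range (c + 1) ⊆ (Finset.range n).filter p := fun x hx ↦ by
      have hxc : x ≤ c := Nat.lt_succ_iff.1 (Finset.mem_range.1 hx)
      exact Finset.mem_filter.2 ⟨Finset.mem_range.2 (hxc.trans_lt hcn), hp x c hxc hcn hpc⟩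
    simpa using Finset.card_le_card hsub

theorem lexLe_iff_toLex_le {p q : ℕ × ℕ} : lexLe p q ↔ toLex p ≤ toLex q :=
  Prod.Lex.toLex_le_toLex.symm

theorem lexLt_iff_toLex_lt {p q : ℕ × ℕ} : lexLt p q ↔ toLex p < toLex q :=
  Prod.Lex.toLex_lt_toLex.symm

section Fillings

/-- The number of boxes with entry `p` in row `r` (0-indexed) of `T`. -/
def rowEntryCount (lam : YoungDiagram) (T : ℕ → ℕ → ℕ × ℕ) (r : ℕ) (p : ℕ × ℕ) : ℕ :=
  (lam.cells.filter fun c ↦ c.1 = r ∧ T c.1 c.2 = p).card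

/-- The filling obtained from `T` by replacing the entry of the box `(r, j)` by `p`. The map `φ`
turns `T` into `setEntry T 0 j (2, (T 0 j).2)`, where `(0, j)` is the rightmost box of the first
row with first coordinate `1`. -/
def setEntry (T : ℕ → ℕ → ℕ × ℕ) (r j : ℕ) (p : ℕ × ℕ) : ℕ → ℕ → ℕ × ℕ :=
  fun i c ↦ if (i, c) = (r, j) then p else T i c

/-- The part of the reading word contributed by the columns `cols` of row `r` (0-indexed): the
second coordinates of the boxes with first coordinate `k`, in the order of `cols`. -/
def rowSegment (T : ℕ → ℕ → ℕ × ℕ) (k r : ℕ) (cols : List ℕ) : List ℕ :=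
  (cols.filter fun c ↦ decide ((T r c).1 = k)).map fun c ↦ (T r c).2

/-- The part of the reading word contributed by the boxes of row `r` with first coordinate `k`. -/
def rowWord (lam : YoungDiagram) (T : ℕ → ℕ → ℕ × ℕ) (k r : ℕ) : List ℕ :=
  rowSegment T k r (List.range (lam.rowLen r))

/-- The part of the reading word contributed by the boxes with first coordinate `k` in the rows
with (0-indexed) number at least `r`, read from the bottom row upwards. -/
def lowerWord (lam : YoungDiagram) (T : ℕ → ℕ → ℕ × ℕ) (k r : ℕ) : List ℕ :=
  (List.range' r (lam.colLen 0 - r)).reverse.flatMap (rowWord lam T k)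

variable {lam : YoungDiagram} {n m : ℕ} {T : ℕ → ℕ → ℕ × ℕ} {k r j c v : ℕ} {p : ℕ × ℕ}

theorem setEntry_self : setEntry T r j p r j = p := if_pos rfl

theorem setEntry_of_ne {i : ℕ} (h : (i, c) ≠ (r, j)) : setEntry T r j p i c = T i c := if_neg h

theorem setEntry_row_ne {i : ℕ} (h : i ≠ r) : setEntry T r j p i = T i :=
  funext fun _ ↦ setEntry_of_ne fun heq ↦ h (Prod.ext_iff.1 heq).1

/-! ### Counting boxes in a row -/

theorem card_filter_row (lam : YoungDiagram) (r : ℕ) (q : ℕ × ℕ → Prop) [DecidablePred q] :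
    (lam.cells.filter fun c ↦ c.1 = r ∧ q c).card =
      ((Finset.range (lam.rowLen r)).filter fun c ↦ q (r, c)).card := by
  have hrow : (lam.cells.filter fun c ↦ c.1 = r ∧ q c) = (lam.row r).filter q := by
    rw [YoungDiagram.row, Finset.filter_filter]
  rw [hrow, YoungDiagram.row_eq_prod, Finset.singleton_product, Finset.filter_map,
    Finset.card_map]
  rfl

theorem alphaRow_succ :
    alphaRow lam T (r + 1) =
      ((Finset.range (lam.rowLen r)).filter fun c ↦ (T r c).1 = 1).card :=
  card_filter_row lam r fun c ↦ (T c.1 c.2).1 = 1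

theorem rowEntryCount_eq :
    rowEntryCount lam T r p = ((Finset.range (lam.rowLen r)).filter fun c ↦ T r c = p).card :=
  card_filter_row lam r fun c ↦ T c.1 c.2 = p

theorem alphaRow_add_rowEntryCount :
    alphaRow lam T (r + 1) + rowEntryCount lam T r (2, v) =
      ((Finset.range (lam.rowLen r)).filter fun c ↦ (T r c).1 = 1 ∨ T r c = (2, v)).card := by
  rw [alphaRow_succ, rowEntryCount_eq, Finset.filter_or, Finset.card_union_of_disjoint]
  refine Finset.disjoint_filter.2 fun c _ h1 h2 ↦ ?_
  simp [h2] at h1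

theorem IsBitabT.fst_le (hB : IsBitabT lam n m T) (hj : (r, j) ∈ lam) (hcj : c ≤ j) :
    (T r c).1 ≤ (T r j).1 :=
  (hB.2.1 r c j hj hcj).elim le_of_lt fun h ↦ h.1.le

theorem IsBitabT.lexLe_two_one_iff (hB : IsBitabT lam n m T) (hc : (r, c) ∈ lam) :
    lexLe (T r c) (2, 1) ↔ (T r c).1 = 1 ∨ T r c = (2, 1) := by
  obtain ⟨⟨h1, -⟩, h2, -⟩ := hB.1 r c hc
  simp only [lexLe, Prod.ext_iff]
  omega

theorem IsBitabT.lt_alphaRow_iff (hB : IsBitabT lam n m T) :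
    c < alphaRow lam T (r + 1) ↔ (r, c) ∈ lam ∧ (T r c).1 = 1 := by
  rw [alphaRow_succ, lt_card_filter_range_iff, YoungDiagram.mem_iff_lt_rowLen]
  intro x y hxy hy h
  have hy := YoungDiagram.mem_iff_lt_rowLen.2 hy
  exact le_antisymm (h ▸ hB.fst_le hy hxy) (hB.1 r x (lam.up_left_mem le_rfl hxy hy)).1.1

theorem IsBitabT.lt_alphaRow_add_rowEntryCount_two_one_iff (hB : IsBitabT lam n m T) :
    c < alphaRow lam T (r + 1) + rowEntryCount lam T r (2, 1) ↔
      (r, c) ∈ lam ∧ lexLe (T r c) (2, 1) := by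
  rw [alphaRow_add_rowEntryCount, lt_card_filter_range_iff, ← YoungDiagram.mem_iff_lt_rowLen]
  · exact and_congr_right fun hc ↦ (hB.lexLe_two_one_iff hc).symm
  · intro x y hxy hy h
    have hy := YoungDiagram.mem_iff_lt_rowLen.2 hy
    rw [← hB.lexLe_two_one_iff hy] at h
    rw [← hB.lexLe_two_one_iff (lam.up_left_mem le_rfl hxy hy)]
    have hle := hB.2.1 r x y hy hxy
    rw [lexLe_iff_toLex_le] at *
    exact hle.trans h

theorem IsBitabT.alphaRow_add_rowEntryCount_two_one_le (hB : IsBitabT lam n m T) :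
    alphaRow lam T (r + 2) + rowEntryCount lam T (r + 1) (2, 1) ≤ alphaRow lam T (r + 1) := by
  refine le_of_forall_lt fun c hc ↦ hB.lt_alphaRow_iff.2 ?_
  obtain ⟨hmem, hle⟩ := hB.lt_alphaRow_add_rowEntryCount_two_one_iff.1 hc
  have hmem' : (r, c) ∈ lam := lam.up_left_mem r.le_succ le_rfl hmem
  have hlt := hB.2.2 r (r + 1) c hmem r.lt_succ_self
  have hpos := hB.1 r c hmem'
  simp only [lexLe, lexLt] at hle hlt
  exact ⟨hmem', by omega⟩

theorem IsBitabT.rightmost_fst_eq_one_iff (hB : IsBitabT lam n m T) :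
    ((r, j) ∈ lam ∧ (T r j).1 = 1 ∧ ∀ j', j < j' → (r, j') ∈ lam → (T r j').1 ≠ 1) ↔
      j + 1 = alphaRow lam T (r + 1) := by
  have hlast : (∀ j', j < j' → (r, j') ∈ lam → (T r j').1 ≠ 1) ↔
      alphaRow lam T (r + 1) ≤ j + 1 := by
    rw [← not_lt, hB.lt_alphaRow_iff, not_and]
    refine ⟨fun h ↦ h (j + 1) j.lt_succ_self, fun h j' hj hmem h1 ↦ ?_⟩
    have := hB.lt_alphaRow_iff.2 ⟨hmem, h1⟩
    have hj' := hB.lt_alphaRow_iff.1 ((Nat.succ_le_of_lt hj).trans_lt this)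
    exact h hj'.1 hj'.2
  rw [hlast, ← and_assoc, ← hB.lt_alphaRow_iff]
  omega

/-! ### Replacing an entry -/

theorem IsBitabT.isBitabT_setEntry (hB : IsBitabT lam n m T)
    (hp : (1 ≤ p.1 ∧ p.1 ≤ n) ∧ 1 ≤ p.2 ∧ p.2 ≤ m) (hle : lexLe (T r j) p)
    (hright : ∀ j', j < j' → (r, j') ∈ lam → lexLe p (T r j'))
    (hbelow : ∀ r', r < r' → (r', j) ∈ lam → lexLt p (T r' j)) :
    IsBitabT lam n m (setEntry T r j p) := by
  obtain ⟨hentry, hrow, hcol⟩ := hB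
  simp only [lexLe_iff_toLex_le, lexLt_iff_toLex_lt] at hle hright hbelow hrow hcol
  simp only [IsBitabT, lexLe_iff_toLex_le, lexLt_iff_toLex_lt]
  refine ⟨fun i c hc ↦ ?_, fun i c c' hc' hcc' ↦ ?_, fun i i' c hc hii' ↦ ?_⟩
  · unfold setEntry
    split_ifs
    exacts [hp, hentry i c hc]
  · have hTT := hrow i c c' hc' hcc'
    by_cases h : (i, c) = (r, j) <;> by_cases h' : (i, c') = (r, j)
    · simp [setEntry, h, h']
    · obtain ⟨rfl, rfl⟩ := Prod.ext_iff.1 h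
      have hlt : c < c' := hcc'.lt_of_ne fun heq ↦ h' (heq ▸ rfl)
      simpa only [setEntry_self, setEntry_of_ne h'] using hright c' hlt hc'
    · obtain ⟨rfl, rfl⟩ := Prod.ext_iff.1 h'
      simpa only [setEntry_self, setEntry_of_ne h] using hTT.trans hle
    · simpa only [setEntry_of_ne h, setEntry_of_ne h'] using hTT
  · have hTT := hcol i i' c hc hii'
    by_cases h : (i, c) = (r, j) <;> by_cases h' : (i', c) = (r, j)
    · have := (Prod.ext_iff.1 (h.trans h'.symm)).1
      omega
    · obtain ⟨rfl, rfl⟩ := Prod.ext_iff.1 h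
      simpa only [setEntry_self, setEntry_of_ne h'] using hbelow i' hii' hc
    · obtain ⟨rfl, rfl⟩ := Prod.ext_iff.1 h'
      simpa only [setEntry_self, setEntry_of_ne h] using hTT.trans_le hle
    · simpa only [setEntry_of_ne h, setEntry_of_ne h'] using hTT

theorem IsBitabT.setEntry_two_one_iff (hB : IsBitabT lam 2 m T)
    (hj : j + 1 = alphaRow lam T 1) (h11 : T 0 j = (1, 1)) :
    IsBitabT lam 2 m (setEntry T 0 j (2, 1)) ↔
      alphaRow lam T 2 + rowEntryCount lam T 1 (2, 1) < alphaRow lam T 1 := by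
  obtain ⟨hmem, -, hright⟩ := hB.rightmost_fst_eq_one_iff.2 hj
  have hcount : alphaRow lam T 2 + rowEntryCount lam T 1 (2, 1) < alphaRow lam T 1 ↔
      ((1, j) ∈ lam → lexLt (2, 1) (T 1 j)) := by
    rw [← hj, Nat.lt_succ_iff, ← not_lt, hB.lt_alphaRow_add_rowEntryCount_two_one_iff, not_and,
      lexLe_iff_toLex_le, lexLt_iff_toLex_lt, not_le]
  rw [hcount]
  refine ⟨fun h hmem' ↦ ?_, fun h ↦ hB.isBitabT_setEntry ?_ ?_ (fun j' hj' hmem' ↦ ?_) ?_⟩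
  · simpa only [setEntry_self, setEntry_row_ne one_ne_zero] using h.2.2 0 1 j hmem' one_pos
  · have := hB.1 0 j hmem
    simp only [h11] at this
    omega
  · exact Or.inl (by simp [h11])
  · have hentry := hB.1 0 j' hmem'
    have := hright j' hj' hmem'
    exact Or.inr ⟨by omega, hentry.2.1⟩
  · intro r' hr' hmem'
    have hlt := h (lam.up_left_mem hr' le_rfl hmem')
    rcases (Nat.succ_le_of_lt hr').eq_or_lt with rfl | hr'
    · exact hlt
    · have hcol := hB.2.2 1 r' j hmem' hr'
      rw [lexLt_iff_toLex_lt] at hlt hcol ⊢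
      exact hlt.trans hcol

/-! ### Reading words -/

theorem lowerWord_eq_append :
    lowerWord lam T k r = lowerWord lam T k (r + 1) ++ rowWord lam T k r := by
  rcases lt_or_ge r (lam.colLen 0) with hr | hr
  · obtain ⟨d, hd⟩ : ∃ d, lam.colLen 0 - r = d + 1 := ⟨lam.colLen 0 - (r + 1), by omega⟩
    simp [lowerWord, hd, show lam.colLen 0 - (r + 1) = d by omega, List.range'_succ]
  · have hempty : lam.rowLen r = 0 := by
      by_contra hne
      exact hr.not_gt (YoungDiagram.mem_iff_lt_colLen.1
        (YoungDiagram.mem_iff_lt_rowLen.2 (Nat.pos_of_ne_zero hne)))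
    simp [lowerWord, rowWord, rowSegment, hempty, show lam.colLen 0 - r = 0 by omega,
      show lam.colLen 0 - (r + 1) = 0 by omega]

theorem w'WordT_eq_flatMap (lam : YoungDiagram) (n : ℕ) (T : ℕ → ℕ → ℕ × ℕ) :
    w'WordT lam n T = (List.range n).reverse.flatMap fun k ↦ lowerWord lam T (k + 1) 0 := by
  simp only [w'WordT, lowerWord, List.map_flatMap, List.map_map, Nat.sub_zero,
    ← List.range_eq_range']
  rfl

theorem w'WordT_two (lam : YoungDiagram) (T : ℕ → ℕ → ℕ × ℕ) :
    w'WordT lam 2 T = lowerWord lam T 2 0 ++ lowerWord lam T 1 0 := by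
  rw [w'WordT_eq_flatMap, show (List.range 2).reverse = [1, 0] from rfl]
  simp

theorem w'WordT_two_eq_append (lam : YoungDiagram) (T : ℕ → ℕ → ℕ × ℕ) :
    w'WordT lam 2 T =
      lowerWord lam T 2 1 ++ (rowWord lam T 2 0 ++ lowerWord lam T 1 1 ++ rowWord lam T 1 0) := by
  rw [w'WordT_two, lowerWord_eq_append (r := 0), lowerWord_eq_append (r := 0)]
  simp only [List.append_assoc, zero_add]

theorem mem_rowWord : v ∈ rowWord lam T k r ↔ ∃ c, (r, c) ∈ lam ∧ T r c = (k, v) := by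
  simp [rowWord, rowSegment, Prod.ext_iff, and_assoc, YoungDiagram.mem_iff_lt_rowLen]

theorem exists_mem_rowWord_of_mem_lowerWord (hv : v ∈ lowerWord lam T k r) :
    ∃ r', r ≤ r' ∧ v ∈ rowWord lam T k r' := by
  obtain ⟨r', hr', hv⟩ := List.mem_flatMap.1 hv
  exact ⟨r', (List.mem_range'_1.1 (List.mem_reverse.1 hr')).1, hv⟩

theorem length_rowWord_one : (rowWord lam T 1 r).length = alphaRow lam T (r + 1) := by
  rw [alphaRow_succ, rowWord, rowSegment, List.length_map]
  rfl

theorem count_rowWord : (rowWord lam T k r).count v = rowEntryCount lam T r (k, v) := by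
  rw [rowEntryCount_eq, rowWord, rowSegment, List.count, List.countP_map, List.countP_filter,
    List.countP_eq_length_filter, ← List.toFinset_card_of_nodup (List.nodup_range.filter _)]
  congr 1
  ext c
  simp [Prod.ext_iff, and_comm]

theorem rowWord_eq_append_segments (hj : (r, j) ∈ lam) :
    rowWord lam T k r = rowSegment T k r (List.range j) ++
      ((if (T r j).1 = k then [(T r j).2] else []) ++
        rowSegment T k r (List.range' (j + 1) (lam.rowLen r - (j + 1)))) := by
  have hlt : j < lam.rowLen r := YoungDiagram.mem_iff_lt_rowLen.1 hj
  have hrange : List.range (lam.rowLen r) =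
      List.range j ++ j :: List.range' (j + 1) (lam.rowLen r - (j + 1)) := by
    rw [← List.range'_succ, List.range_eq_range', List.range_eq_range',
      show lam.rowLen r - (j + 1) + 1 = lam.rowLen r - j by omega]
    simpa [Nat.add_sub_cancel' hlt.le] using
      (List.range'_append_1 (s := 0) (m := j) (n := lam.rowLen r - j)).symm
  by_cases h : (T r j).1 = k <;> simp [rowWord, rowSegment, hrange, h]

theorem rowSegment_setEntry_of_notMem {cols : List ℕ} (hj : j ∉ cols) :
    rowSegment (setEntry T r j p) k r cols = rowSegment T k r cols := by
  have heq : ∀ c ∈ cols, setEntry T r j p r c = T r c := fun c hc ↦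
    setEntry_of_ne fun h ↦ hj ((Prod.mk.inj h).2 ▸ hc)
  simp only [rowSegment]
  rw [List.filter_congr fun c hc ↦ by rw [heq c hc]]
  exact List.map_congr_left fun c hc ↦ by rw [heq c (List.mem_of_mem_filter hc)]

theorem rowSegment_eq_nil {cols : List ℕ} (h : ∀ c ∈ cols, (T r c).1 ≠ k) :
    rowSegment T k r cols = [] := by
  rw [rowSegment, List.map_eq_nil_iff, List.filter_eq_nil_iff]
  simpa using h

theorem IsBitabT.rowWord_one_eq_append (hB : IsBitabT lam n m T)
    (hj : j + 1 = alphaRow lam T (r + 1)) :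
    rowWord lam T 1 r = rowWord lam (setEntry T r j (2, v)) 1 r ++ [(T r j).2] := by
  obtain ⟨hmem, hone, hlast⟩ := hB.rightmost_fst_eq_one_iff.2 hj
  have hright : rowSegment T 1 r (List.range' (j + 1) (lam.rowLen r - (j + 1))) = [] :=
    rowSegment_eq_nil fun c hc ↦ by
      rw [List.mem_range'_1] at hc
      exact hlast c hc.1 (YoungDiagram.mem_iff_lt_rowLen.2 (by omega))
  rw [rowWord_eq_append_segments hmem, rowWord_eq_append_segments hmem, setEntry_self,
    rowSegment_setEntry_of_notMem (by simp), rowSegment_setEntry_of_notMem (by simp), hright]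
  simp [hone]

theorem IsBitabT.rowWord_two_setEntry (hB : IsBitabT lam n m T)
    (hj : j + 1 = alphaRow lam T (r + 1)) :
    rowWord lam (setEntry T r j (2, v)) 2 r = v :: rowWord lam T 2 r := by
  obtain ⟨hmem, hone, -⟩ := hB.rightmost_fst_eq_one_iff.2 hj
  have hleft : rowSegment T 2 r (List.range j) = [] := rowSegment_eq_nil fun c hc ↦ by
    have := hB.fst_le hmem (List.mem_range.1 hc).le
    omega
  rw [rowWord_eq_append_segments hmem, rowWord_eq_append_segments hmem, setEntry_self,
    rowSegment_setEntry_of_notMem (by simp), rowSegment_setEntry_of_notMem (by simp), hleft]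
  simp [hone]

theorem lowerWord_congr {T' : ℕ → ℕ → ℕ × ℕ} (h : ∀ r', r ≤ r' → T r' = T' r') :
    lowerWord lam T k r = lowerWord lam T' k r := by
  refine List.flatMap_congr fun r' hr' ↦ ?_
  rw [List.mem_reverse, List.mem_range'_1] at hr'
  simp only [rowWord, rowSegment, h r' hr'.1]

theorem IsBitabT.pairwise_rowWord (hB : IsBitabT lam n m T) :
    (rowWord lam T k r).Pairwise (· ≤ ·) := by
  rw [rowWord, rowSegment, List.pairwise_map]
  refine (List.pairwise_lt_range.filter _).imp_of_mem fun {c c'} hc hc' hlt ↦ ?_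
  simp only [List.mem_filter, List.mem_range, decide_eq_true_eq] at hc hc'
  have hle := hB.2.1 r c c' (YoungDiagram.mem_iff_lt_rowLen.2 hc'.1) hlt.le
  simp only [lexLe] at hle
  omega

theorem IsBitabT.pos_of_mem_rowWord (hB : IsBitabT lam n m T) (hv : v ∈ rowWord lam T k r) :
    1 ≤ v := by
  obtain ⟨c, hc, hT⟩ := mem_rowWord.1 hv
  simpa [hT] using (hB.1 r c hc).2.1

/-! ### Boxes with first coordinate 1 -/

theorem IsBitabT.succ_le_snd (hB : IsBitabT lam n m T) (hc : (r, c) ∈ lam)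
    (h1 : (T r c).1 = 1) : r + 1 ≤ (T r c).2 := by
  induction r with
  | zero => exact (hB.1 0 c hc).2.1
  | succ r ih =>
    have hc' : (r, c) ∈ lam := lam.up_left_mem r.le_succ le_rfl hc
    have hpos := (hB.1 r c hc').1.1
    have hlt := hB.2.2 r (r + 1) c hc r.lt_succ_self
    simp only [lexLt] at hlt
    have := ih hc' (by omega)
    omega

theorem IsBitabT.exists_lowerWord_append (hB : IsBitabT lam n m T)
    (hY : Yamanouchi (lowerWord lam T 1 0)) (r : ℕ) :
    ∃ V, lowerWord lam T 1 0 = lowerWord lam T 1 r ++ V ∧ ∀ v ∈ V, v ≤ r := by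
  induction r with
  | zero => exact ⟨[], by simp, by simp⟩
  | succ r ih =>
    obtain ⟨V, hV, hle⟩ := ih
    rw [lowerWord_eq_append (r := r), List.append_assoc] at hV
    refine ⟨rowWord lam T 1 r ++ V, hV, fun v hv ↦ ?_⟩
    rcases List.mem_append.1 hv with hv | hv
    · exact (hV ▸ hY).of_append.le_succ_of_sorted hB.pairwise_rowWord hle hv
    · exact (hle v hv).trans r.le_succ

theorem IsBitabT.eq_of_fst_eq_one (hB : IsBitabT lam n m T)
    (hY : Yamanouchi (lowerWord lam T 1 0)) (hc : (r, c) ∈ lam) (h1 : (T r c).1 = 1) :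
    T r c = (1, r + 1) := by
  obtain ⟨V, hV, hle⟩ := hB.exists_lowerWord_append hY r
  rw [lowerWord_eq_append (r := r), List.append_assoc] at hV
  have hmem : (T r c).2 ∈ rowWord lam T 1 r := mem_rowWord.2 ⟨c, hc, Prod.ext h1 rfl⟩
  exact Prod.ext h1 <| le_antisymm
    ((hV ▸ hY).of_append.le_succ_of_sorted hB.pairwise_rowWord hle hmem) (hB.succ_le_snd hc h1)

theorem IsBitabT.rowWord_one_eq_replicate (hB : IsBitabT lam n m T)
    (hY : Yamanouchi (lowerWord lam T 1 0)) (r : ℕ) :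
    rowWord lam T 1 r = List.replicate (alphaRow lam T (r + 1)) (r + 1) := by
  refine List.eq_replicate_iff.2 ⟨length_rowWord_one, fun v hv ↦ ?_⟩
  obtain ⟨c, hc, hT⟩ := mem_rowWord.1 hv
  simpa [hT] using hB.eq_of_fst_eq_one hY hc (by rw [hT])

theorem IsBitabT.notMem_lowerWord_one (hB : IsBitabT lam n m T) (hv : v ≤ r) :
    v ∉ lowerWord lam T 1 r := by
  intro hmem
  obtain ⟨r', hr', hmem⟩ := exists_mem_rowWord_of_mem_lowerWord hmem
  obtain ⟨c, hc, hT⟩ := mem_rowWord.1 hmem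
  have := hB.succ_le_snd hc (by rw [hT])
  simp only [hT] at this
  omega

theorem IsBitabT.count_lowerWord_one (hB : IsBitabT lam n m T)
    (hY : Yamanouchi (lowerWord lam T 1 0)) (r : ℕ) :
    (lowerWord lam T 1 r).count (r + 1) = alphaRow lam T (r + 1) := by
  rw [lowerWord_eq_append, List.count_append,
    List.count_eq_zero.2 (hB.notMem_lowerWord_one le_rfl), hB.rowWord_one_eq_replicate hY]
  simp

/-! ### The map `φ` -/

theorem IsBitab'.yamanouchi_lowerWord_one (hT : IsBitab' lam m T) :
    Yamanouchi (lowerWord lam T 1 0) := by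
  have hY := hT.2
  rw [w'WordT_two] at hY
  exact hY.of_append

theorem IsBitab'.w'WordT_eq (hT : IsBitab' lam m T) :
    w'WordT lam 2 T = lowerWord lam T 2 1 ++
      (rowWord lam T 2 0 ++ lowerWord lam T 1 1 ++ List.replicate (alphaRow lam T 1) 1) := by
  rw [w'WordT_two_eq_append, hT.1.rowWord_one_eq_replicate hT.yamanouchi_lowerWord_one]

theorem IsBitab'.count_two_rowWord_append_lowerWord (hT : IsBitab' lam m T) :
    (rowWord lam T 2 0 ++ lowerWord lam T 1 1).count 2 =
      alphaRow lam T 2 + rowEntryCount lam T 0 (2, 2) := by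
  rw [List.count_append, count_rowWord, hT.1.count_lowerWord_one hT.yamanouchi_lowerWord_one 1,
    add_comm]

theorem IsBitab'.alphaRow_add_rowEntryCount_two_two_le (hT : IsBitab' lam m T) :
    alphaRow lam T 2 + rowEntryCount lam T 0 (2, 2) ≤ alphaRow lam T 1 := by
  have hY := hT.2
  rw [hT.w'WordT_eq] at hY
  rw [← hT.count_two_rowWord_append_lowerWord]
  exact hY.of_append.count_two_le_of_sorted hT.1.pairwise_rowWord
    (fun _ ↦ hT.1.pos_of_mem_rowWord) (hT.1.notMem_lowerWord_one le_rfl)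

theorem IsBitab'.w'WordT_setEntry (hT : IsBitab' lam m T) (hj : j + 1 = alphaRow lam T 1) :
    w'WordT lam 2 (setEntry T 0 j (2, 1)) = lowerWord lam T 2 1 ++
      1 :: (rowWord lam T 2 0 ++ lowerWord lam T 1 1 ++ List.replicate j 1) := by
  have hlower (k : ℕ) : lowerWord lam (setEntry T 0 j (2, 1)) k 1 = lowerWord lam T k 1 :=
    lowerWord_congr fun r' hr' ↦ setEntry_row_ne (Nat.ne_of_gt hr')
  have hone : rowWord lam (setEntry T 0 j (2, 1)) 1 0 = List.replicate j 1 := by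
    have happend := hT.1.rowWord_one_eq_append (r := 0) (v := 1) hj
    rw [hT.1.rowWord_one_eq_replicate hT.yamanouchi_lowerWord_one, ← hj,
      List.replicate_succ'] at happend
    exact (List.append_inj_left' happend rfl).symm
  rw [w'WordT_two_eq_append, hlower, hlower, hone, hT.1.rowWord_two_setEntry hj]
  simp

theorem IsBitab'.yamanouchi_setEntry_iff (hT : IsBitab' lam m T)
    (hj : j + 1 = alphaRow lam T 1) :
    Yamanouchi (w'WordT lam 2 (setEntry T 0 j (2, 1))) ↔
      alphaRow lam T 2 + rowEntryCount lam T 0 (2, 2) < alphaRow lam T 1 := by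
  have hY := hT.2
  rw [hT.w'WordT_eq, ← hj] at hY
  have hrotate := hY
  rw [List.replicate_succ', ← List.append_assoc (_ ++ _)] at hrotate
  rw [hT.w'WordT_setEntry hj, hrotate.append_one_cons_iff,
    hY.of_append.append_replicate_one_iff hT.1.pairwise_rowWord
      (fun _ ↦ hT.1.pos_of_mem_rowWord) (hT.1.notMem_lowerWord_one le_rfl),
    hT.count_two_rowWord_append_lowerWord, ← hj, Nat.lt_succ_iff]

theorem IsBitab'.setEntry_iff (hT : IsBitab' lam m T) (hj : j + 1 = alphaRow lam T 1) :
    IsBitab' lam m (setEntry T 0 j (2, (T 0 j).2)) ↔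
      alphaRow lam T 2 + rowEntryCount lam T 1 (2, 1) < alphaRow lam T 1 ∧
        alphaRow lam T 2 + rowEntryCount lam T 0 (2, 2) < alphaRow lam T 1 := by
  obtain ⟨hmem, hone, -⟩ := hT.1.rightmost_fst_eq_one_iff.2 hj
  have h11 : T 0 j = (1, 1) := hT.1.eq_of_fst_eq_one hT.yamanouchi_lowerWord_one hmem hone
  rw [h11]
  exact and_congr (hT.1.setEntry_two_one_iff hj h11) (hT.yamanouchi_setEntry_iff hj)

end Fillings

/-- Let `T ∈ B'_λ(2,m)` and let `α_i` be the number of boxes in row `i` of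
`T` with first coordinate `1`. Then `φ(T) = 0` — i.e. there is no box `(0,j)` which is the
rightmost box of the first row with first coordinate `1` and such that changing its entry
`(1,a)` to `(2,a)` produces an element of `B'_λ(2,m)` — if and only if `T` is a Kronecker
tableau: (I) `α_1 = α_2`, or (II) `α_1 > α_2` and either (i) the number of boxes in the second
row of `T` with entry `(2,1)` equals `α_1 − α_2`, or (ii) the number of boxes in the first row
of `T` with entry `(2,2)` equals `α_1 − α_2`. -/
theorem stmt_13 (lam : YoungDiagram) (m : ℕ) (hm : 1 ≤ m)
    (T : ℕ → ℕ → ℕ × ℕ) (hT : IsBitab' lam m T) :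
    (¬ ∃ j : ℕ, (0, j) ∈ lam ∧ (T 0 j).1 = 1 ∧
        (∀ j', j < j' → (0, j') ∈ lam → (T 0 j').1 ≠ 1) ∧
        IsBitab' lam m (fun r c => if (r, c) = (0, j) then (2, (T 0 j).2) else T r c)) ↔
      (alphaRow lam T 1 = alphaRow lam T 2 ∨
        (alphaRow lam T 2 < alphaRow lam T 1 ∧
          ((lam.cells.filter fun c => c.1 = 1 ∧ T c.1 c.2 = (2, 1)).card =
              alphaRow lam T 1 - alphaRow lam T 2 ∨
            (lam.cells.filter fun c => c.1 = 0 ∧ T c.1 c.2 = (2, 2)).card =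
              alphaRow lam T 1 - alphaRow lam T 2))) := by
  change _ ↔ _ ∨ _ ∧ (rowEntryCount lam T 1 (2, 1) = _ ∨ rowEntryCount lam T 0 (2, 2) = _)
  have hcol : alphaRow lam T 2 + rowEntryCount lam T 1 (2, 1) ≤ alphaRow lam T 1 :=
    hT.1.alphaRow_add_rowEntryCount_two_one_le
  have hword : alphaRow lam T 2 + rowEntryCount lam T 0 (2, 2) ≤ alphaRow lam T 1 :=
    hT.alphaRow_add_rowEntryCount_two_two_le
  have hφ : (∃ j : ℕ, (0, j) ∈ lam ∧ (T 0 j).1 = 1 ∧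
        (∀ j', j < j' → (0, j') ∈ lam → (T 0 j').1 ≠ 1) ∧
        IsBitab' lam m (setEntry T 0 j (2, (T 0 j).2))) ↔
      alphaRow lam T 2 + rowEntryCount lam T 1 (2, 1) < alphaRow lam T 1 ∧
        alphaRow lam T 2 + rowEntryCount lam T 0 (2, 2) < alphaRow lam T 1 := by
    constructor
    · rintro ⟨j, hmem, hone, hlast, hφT⟩
      exact (hT.setEntry_iff (hT.1.rightmost_fst_eq_one_iff.1 ⟨hmem, hone, hlast⟩)).1 hφT
    · intro h
      obtain ⟨j, hj⟩ := Nat.exists_eq_add_one_of_ne_zero (Nat.ne_zero_of_lt h.1)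
      obtain ⟨hmem, hone, hlast⟩ := hT.1.rightmost_fst_eq_one_iff.2 hj.symm
      exact ⟨j, hmem, hone, hlast, (hT.setEntry_iff hj.symm).2 h⟩
  refine (not_congr hφ).trans ?_
  omega
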